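/- arXiv:1912.04531 — 5 statements merged into one kernel-verified Lean document; each statement's English description precedes it below -/
import Mathlib

section
/- Let X_1, X_2, ..., X_N be ℝ^d-valued random vectors on a probability space such that E[X_n | X_1, ..., X_{n-1}] = 0 for each n and ‖X_n‖ ≤ M almost surely. Then for any δ ∈ (0,1), P[‖X_1 + ... + X_N‖² ≤ 2 log(2/δ) M² N] ≥ 1 − δ. -/
open MeasureTheory

/-!
Write `V = ∑ i < N, c i ^ 2` and let `S` be a martingale in a Hilbert space with increments bounded
by `c i`. Since `u ↦ cosh √u` has a power series with nonnegative coefficients, it is convex;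
comparing `‖s + x‖ ^ 2` with the endpoints `(‖s‖ ± c) ^ 2` gives
`cosh ‖s + x‖ ≤ cosh ‖s‖ * cosh c + ⟪w s, x⟫` for `‖x‖ ≤ c`, where `w s` is a multiple of `s`
independent of `x`. The last term averages out for a martingale increment `x`, so that
`E cosh (l * ‖S N - S 0‖) ≤ ∏ cosh (l * c i) ≤ exp (l ^ 2 * V / 2)` without any dependence on the
dimension. Markov's inequality and `l = r / V` bound the probability of `r ≤ ‖S N - S 0‖` by
`2 * exp (-r ^ 2 / (2 * V))`.
-/

lemma convexOn_cosh_sqrt : ConvexOn ℝ (Set.Ici 0) fun u : ℝ ↦ Real.cosh √u := by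
  have hasSum_cosh_sqrt {u : ℝ} (hu : 0 ≤ u) :
      HasSum (fun n : ℕ ↦ u ^ n / (2 * n).factorial) (Real.cosh √u) := by
    simpa only [pow_mul, Real.sq_sqrt hu] using Real.hasSum_cosh √u
  refine ⟨convex_Ici 0, fun u hu v hv a b ha hb hab ↦ ?_⟩
  refine hasSum_le (fun n ↦ ?_) (hasSum_cosh_sqrt (convex_Ici 0 hu hv ha hb hab))
    (((hasSum_cosh_sqrt hu).mul_left a).add ((hasSum_cosh_sqrt hv).mul_left b))
  rw [← mul_div_assoc, ← mul_div_assoc, ← add_div]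
  gcongr
  exact (convexOn_pow n).2 hu hv ha hb hab

lemma exp_div_two_le_cosh (x : ℝ) : Real.exp x / 2 ≤ Real.cosh x := by
  rw [Real.cosh_eq]
  linarith [Real.exp_pos (-x)]

section InnerProductSpace

variable {E : Type*} [NormedAddCommGroup E] [InnerProductSpace ℝ E]

lemma abs_inner_normalize_le (s x : E) : |inner ℝ (NormedSpace.normalize s) x| ≤ ‖x‖ := by
  rcases eq_or_ne s 0 with rfl | hs
  · simp
  · simpa [NormedSpace.norm_normalize hs] using
      abs_real_inner_le_norm (NormedSpace.normalize s) x

/-- The weight of the martingale increment `x` in the linear upper bound for `cosh ‖s + x‖` on the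
ball `‖x‖ ≤ c`. For `s = 0` or `c = 0` the conventions `0⁻¹ = 0` and `x / 0 = 0` make it vanish. -/
noncomputable def coshSlope (c : ℝ) (s : E) : E :=
  (Real.sinh ‖s‖ * (Real.sinh c / c)) • NormedSpace.normalize s

lemma cosh_norm_add_le {c : ℝ} {s x : E} (hx : ‖x‖ ≤ c) :
    Real.cosh ‖s + x‖ ≤ Real.cosh ‖s‖ * Real.cosh c + inner ℝ (coshSlope c s) x := by
  have hc₀ : 0 ≤ c := (norm_nonneg x).trans hx
  rcases hc₀.eq_or_lt with rfl | hc
  · simp [coshSlope, norm_le_zero_iff.1 hx]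
  set i := inner ℝ (NormedSpace.normalize s) x with hi
  have hsx : inner ℝ s x = ‖s‖ * i := by
    rw [hi, ← real_inner_smul_left, NormedSpace.norm_smul_normalize]
  obtain ⟨hi₁, hi₂⟩ := abs_le.1 ((abs_inner_normalize_le s x).trans hx)
  -- With these weights, `‖s‖ + c` and `‖s‖ - c` average to the component `‖s‖ + i` of `s + x`
  -- along `s`.
  have hp : 0 ≤ (c + i) / (2 * c) := div_nonneg (by linarith) (by linarith)
  have hq : 0 ≤ (c - i) / (2 * c) := div_nonneg (by linarith) (by linarith)
  have hpq : (c + i) / (2 * c) + (c - i) / (2 * c) = 1 := by field_simp; ring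
  have hnorm : ‖s + x‖ ^ 2 ≤
      (c + i) / (2 * c) * (‖s‖ + c) ^ 2 + (c - i) / (2 * c) * (‖s‖ - c) ^ 2 := by
    calc ‖s + x‖ ^ 2 = ‖s‖ ^ 2 + 2 * (‖s‖ * i) + ‖x‖ ^ 2 := by rw [norm_add_sq_real, hsx]
      _ ≤ ‖s‖ ^ 2 + 2 * (‖s‖ * i) + c ^ 2 := by gcongr
      _ = _ := by field_simp; ring
  calc Real.cosh ‖s + x‖
      ≤ Real.cosh √((c + i) / (2 * c) * (‖s‖ + c) ^ 2 + (c - i) / (2 * c) * (‖s‖ - c) ^ 2) := by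
        rw [Real.cosh_le_cosh, abs_norm, abs_of_nonneg (Real.sqrt_nonneg _)]
        exact Real.le_sqrt_of_sq_le hnorm
    _ ≤ (c + i) / (2 * c) * Real.cosh (‖s‖ + c) + (c - i) / (2 * c) * Real.cosh (‖s‖ - c) := by
        simpa [Real.sqrt_sq_eq_abs] using
          convexOn_cosh_sqrt.2 (sq_nonneg (‖s‖ + c)) (sq_nonneg (‖s‖ - c)) hp hq hpq
    _ = Real.cosh ‖s‖ * Real.cosh c + inner ℝ (coshSlope c s) x := by
        rw [coshSlope, real_inner_smul_left, ← hi, Real.cosh_add, Real.cosh_sub]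
        field_simp
        ring

lemma abs_inner_coshSlope_le {c : ℝ} {s x : E} (hx : ‖x‖ ≤ c) :
    |inner ℝ (coshSlope c s) x| ≤ Real.sinh c * Real.cosh ‖s‖ := by
  have hc : 0 ≤ c := (norm_nonneg x).trans hx
  have hsinh : 0 ≤ Real.sinh c := Real.sinh_nonneg_iff.2 hc
  have hsinh' : 0 ≤ Real.sinh ‖s‖ := Real.sinh_nonneg_iff.2 (norm_nonneg s)
  calc |inner ℝ (coshSlope c s) x|
      = Real.sinh ‖s‖ * (Real.sinh c / c) * |inner ℝ (NormedSpace.normalize s) x| := by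
        rw [coshSlope, real_inner_smul_left, abs_mul,
          abs_of_nonneg (mul_nonneg hsinh' (div_nonneg hsinh hc))]
    _ ≤ Real.cosh ‖s‖ * (Real.sinh c / c) * c := by
        gcongr
        · exact (Real.sinh_lt_cosh _).le
        · exact (abs_inner_normalize_le s x).trans hx
    _ ≤ Real.sinh c * Real.cosh ‖s‖ := by
        rw [mul_assoc, mul_comm]
        gcongr
        exact mul_le_of_le_div₀ hsinh hc le_rfl

end InnerProductSpace

section OneStep

variable {E Ω : Type*} [NormedAddCommGroup E] [InnerProductSpace ℝ E]
  {m m0 : MeasurableSpace Ω} {P : Measure Ω} {s x : Ω → E} {c : ℝ}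

lemma stronglyMeasurable_coshSlope (hs : StronglyMeasurable s) :
    StronglyMeasurable fun ω ↦ coshSlope c (s ω) :=
  ((Real.continuous_sinh.comp_stronglyMeasurable hs.norm).mul_const _).smul
    (hs.norm.measurable.inv.stronglyMeasurable.smul hs)

lemma integral_inner_eq_zero_of_condExp_eq_zero [CompleteSpace E] (hm : m ≤ m0)
    [SigmaFinite (P.trim hm)] {W : Ω → E} (hW : StronglyMeasurable[m] W) (hx : Integrable x P)
    (hWx : Integrable (fun ω ↦ inner ℝ (W ω) (x ω)) P) (hx₀ : P[x | m] =ᵐ[P] 0) :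
    ∫ ω, inner ℝ (W ω) (x ω) ∂P = 0 := by
  have hpull : P[fun ω ↦ inner ℝ (W ω) (x ω) | m] =ᵐ[P] 0 := by
    filter_upwards [condExp_bilin_of_stronglyMeasurable_left (innerSL ℝ) hW hWx hx, hx₀]
      with ω hω hω₀
    exact hω.trans (by simp [hω₀])
  rw [← integral_condExp hm, integral_congr_ae hpull]
  simp

lemma integrable_inner_coshSlope (hs : StronglyMeasurable s) (hx : AEStronglyMeasurable x P)
    (hcosh : Integrable (fun ω ↦ Real.cosh ‖s ω‖) P) (hxc : ∀ᵐ ω ∂P, ‖x ω‖ ≤ c) :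
    Integrable (fun ω ↦ inner ℝ (coshSlope c (s ω)) (x ω)) P :=
  (hcosh.const_mul (Real.sinh c)).mono'
    ((stronglyMeasurable_coshSlope hs).aestronglyMeasurable.inner hx)
    (hxc.mono fun _ ↦ abs_inner_coshSlope_le)

lemma integral_cosh_norm_add_le [CompleteSpace E] [IsFiniteMeasure P] (hm : m ≤ m0)
    (hs : StronglyMeasurable[m] s) (hx : AEStronglyMeasurable x P)
    (hcosh : Integrable (fun ω ↦ Real.cosh ‖s ω‖) P) (hxc : ∀ᵐ ω ∂P, ‖x ω‖ ≤ c)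
    (hx₀ : P[x | m] =ᵐ[P] 0) :
    ∫ ω, Real.cosh ‖s ω + x ω‖ ∂P ≤ (∫ ω, Real.cosh ‖s ω‖ ∂P) * Real.cosh c := by
  have hslope := integrable_inner_coshSlope (hs.mono hm) hx hcosh hxc
  calc ∫ ω, Real.cosh ‖s ω + x ω‖ ∂P
      ≤ ∫ ω, Real.cosh ‖s ω‖ * Real.cosh c + inner ℝ (coshSlope c (s ω)) (x ω) ∂P :=
        integral_mono_of_nonneg (.of_forall fun _ ↦ (Real.cosh_pos _).le)
          ((hcosh.mul_const _).add hslope) (hxc.mono fun _ ↦ cosh_norm_add_le)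
    _ = (∫ ω, Real.cosh ‖s ω‖ ∂P) * Real.cosh c := by
        rw [integral_add (hcosh.mul_const _) hslope, integral_mul_const,
          integral_inner_eq_zero_of_condExp_eq_zero hm (stronglyMeasurable_coshSlope hs)
            (.of_bound hx c hxc) hslope hx₀, add_zero]

end OneStep

section Bounded

variable {E Ω : Type*} [NormedAddCommGroup E] {m0 : MeasurableSpace Ω} {P : Measure Ω}

lemma integrable_cosh_norm_of_bound [IsFiniteMeasure P] {f : Ω → E} {R : ℝ}
    (hf : AEStronglyMeasurable f P) (hfR : ∀ᵐ ω ∂P, ‖f ω‖ ≤ R) :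
    Integrable (fun ω ↦ Real.cosh ‖f ω‖) P := by
  refine .of_bound (Real.continuous_cosh.comp_aestronglyMeasurable hf.norm) (Real.cosh R) ?_
  filter_upwards [hfR] with ω hω
  rw [Real.norm_of_nonneg (Real.cosh_pos _).le, Real.cosh_le_cosh]
  exact abs_le_abs_of_nonneg (norm_nonneg _) hω

variable {S : ℕ → Ω → E} {c : ℕ → ℝ} {N : ℕ}

lemma ae_norm_sub_le_sum (hc : ∀ i < N, ∀ᵐ ω ∂P, ‖S (i + 1) ω - S i ω‖ ≤ c i) :
    ∀ᵐ ω ∂P, ‖S N ω - S 0 ω‖ ≤ ∑ i ∈ Finset.range N, c i := by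
  filter_upwards [ae_all_iff.2 fun i ↦ ae_all_iff.2 (hc i)] with ω hω
  rw [← Finset.sum_range_sub (fun i ↦ S i ω)]
  exact norm_sum_le_of_le _ fun i hi ↦ hω i (Finset.mem_range.1 hi)

lemma ae_eq_of_norm_sub_le_of_sum_sq_eq_zero
    (hc : ∀ i < N, ∀ᵐ ω ∂P, ‖S (i + 1) ω - S i ω‖ ≤ c i)
    (hV : ∑ i ∈ Finset.range N, c i ^ 2 = 0) : S N =ᵐ[P] S 0 := by
  have hc₀ : ∀ i ∈ Finset.range N, c i = 0 := fun i hi ↦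
    pow_eq_zero_iff two_ne_zero |>.1 <|
      (Finset.sum_eq_zero_iff_of_nonneg fun _ _ ↦ sq_nonneg _).1 hV i hi
  filter_upwards [ae_norm_sub_le_sum hc] with ω hω
  rw [Finset.sum_eq_zero hc₀] at hω
  exact sub_eq_zero.1 (norm_le_zero_iff.1 hω)

end Bounded

lemma condExp_martingale_sub_eq_zero {ι E Ω : Type*} [Preorder ι] [NormedAddCommGroup E]
    [NormedSpace ℝ E] [CompleteSpace E] {m0 : MeasurableSpace Ω} {P : Measure Ω}
    {ℱ : Filtration ι m0} {S : ι → Ω → E} (hS : Martingale S ℱ P) {i j : ι} (hij : i ≤ j) :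
    P[S j - S i | ℱ i] =ᵐ[P] 0 := by
  filter_upwards [condExp_sub (hS.integrable j) (hS.integrable i) (ℱ i),
    hS.condExp_ae_eq hij, hS.condExp_ae_eq (le_refl i)] with ω hsub hj hi
  simp [hsub, hj, hi]

section Martingale

variable {E Ω : Type*} [NormedAddCommGroup E] [InnerProductSpace ℝ E] [CompleteSpace E]
  {m0 : MeasurableSpace Ω} {P : Measure Ω} [IsProbabilityMeasure P] {ℱ : Filtration ℕ m0}
  {S : ℕ → Ω → E} {c : ℕ → ℝ} {N : ℕ}

lemma integrable_cosh_norm_martingale_sub (hS : Martingale S ℱ P)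
    (hc : ∀ i < N, ∀ᵐ ω ∂P, ‖S (i + 1) ω - S i ω‖ ≤ c i) :
    Integrable (fun ω ↦ Real.cosh ‖S N ω - S 0 ω‖) P :=
  integrable_cosh_norm_of_bound ((hS.integrable N).sub (hS.integrable 0)).aestronglyMeasurable
    (ae_norm_sub_le_sum hc)

lemma integral_cosh_norm_martingale_sub_le (hS : Martingale S ℱ P)
    (hc : ∀ i < N, ∀ᵐ ω ∂P, ‖S (i + 1) ω - S i ω‖ ≤ c i) :
    ∫ ω, Real.cosh ‖S N ω - S 0 ω‖ ∂P ≤ ∏ i ∈ Finset.range N, Real.cosh (c i) := by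
  induction N with
  | zero => simp
  | succ n ih =>
    have hc' : ∀ i < n, ∀ᵐ ω ∂P, ‖S (i + 1) ω - S i ω‖ ≤ c i := fun i hi ↦
      hc i (hi.trans n.lt_succ_self)
    have hs : StronglyMeasurable[ℱ n] (S n - S 0) :=
      (hS.stronglyMeasurable n).sub ((hS.stronglyMeasurable 0).mono (ℱ.mono n.zero_le))
    have hstep := integral_cosh_norm_add_le (ℱ.le n) hs
      ((hS.integrable (n + 1)).sub (hS.integrable n)).1 (integrable_cosh_norm_martingale_sub hS hc')
      (hc n n.lt_succ_self) (condExp_martingale_sub_eq_zero hS n.le_succ)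
    calc ∫ ω, Real.cosh ‖S (n + 1) ω - S 0 ω‖ ∂P
        ≤ (∫ ω, Real.cosh ‖S n ω - S 0 ω‖ ∂P) * Real.cosh (c n) := by
          simpa only [Pi.sub_apply, sub_add_sub_cancel'] using hstep
      _ ≤ ∏ i ∈ Finset.range (n + 1), Real.cosh (c i) := by
          rw [Finset.prod_range_succ]
          gcongr
          exact ih hc'

lemma integral_cosh_norm_martingale_sub_le_exp (hS : Martingale S ℱ P)
    (hc : ∀ i < N, ∀ᵐ ω ∂P, ‖S (i + 1) ω - S i ω‖ ≤ c i) :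
    ∫ ω, Real.cosh ‖S N ω - S 0 ω‖ ∂P ≤ Real.exp ((∑ i ∈ Finset.range N, c i ^ 2) / 2) :=
  calc ∫ ω, Real.cosh ‖S N ω - S 0 ω‖ ∂P
      ≤ ∏ i ∈ Finset.range N, Real.cosh (c i) := integral_cosh_norm_martingale_sub_le hS hc
    _ ≤ ∏ i ∈ Finset.range N, Real.exp (c i ^ 2 / 2) :=
        Finset.prod_le_prod (fun _ _ ↦ (Real.cosh_pos _).le)
          fun _ _ ↦ Real.cosh_le_exp_half_sq _
    _ = Real.exp ((∑ i ∈ Finset.range N, c i ^ 2) / 2) := by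
        rw [← Real.exp_sum, Finset.sum_div]

lemma measureReal_le_norm_martingale_sub_le_exp_div_cosh (hS : Martingale S ℱ P)
    (hc : ∀ i < N, ∀ᵐ ω ∂P, ‖S (i + 1) ω - S i ω‖ ≤ c i) {r : ℝ} (hr : 0 ≤ r) :
    P.real {ω | r ≤ ‖S N ω - S 0 ω‖} ≤
      Real.exp ((∑ i ∈ Finset.range N, c i ^ 2) / 2) / Real.cosh r := by
  rw [le_div_iff₀' (Real.cosh_pos r)]
  calc Real.cosh r * P.real {ω | r ≤ ‖S N ω - S 0 ω‖}
      = Real.cosh r * P.real {ω | Real.cosh r ≤ Real.cosh ‖S N ω - S 0 ω‖} := by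
        simp only [Real.cosh_le_cosh, abs_norm, abs_of_nonneg hr]
    _ ≤ ∫ ω, Real.cosh ‖S N ω - S 0 ω‖ ∂P :=
        mul_meas_ge_le_integral_of_nonneg (.of_forall fun _ ↦ (Real.cosh_pos _).le)
          (integrable_cosh_norm_martingale_sub hS hc) _
    _ ≤ Real.exp ((∑ i ∈ Finset.range N, c i ^ 2) / 2) :=
        integral_cosh_norm_martingale_sub_le_exp hS hc

lemma measureReal_le_norm_martingale_sub_le (hS : Martingale S ℱ P)
    (hc : ∀ i < N, ∀ᵐ ω ∂P, ‖S (i + 1) ω - S i ω‖ ≤ c i)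
    (hV : 0 < ∑ i ∈ Finset.range N, c i ^ 2) {r : ℝ} (hr : 0 ≤ r) :
    P.real {ω | r ≤ ‖S N ω - S 0 ω‖} ≤
      2 * Real.exp (-r ^ 2 / (2 * ∑ i ∈ Finset.range N, c i ^ 2)) := by
  rcases hr.eq_or_lt with rfl | hr
  · simp
  set V := ∑ i ∈ Finset.range N, c i ^ 2
  set l := r / V with hl
  have hl₀ : 0 < l := by positivity
  have hnorm (i j : ℕ) (ω : Ω) : ‖(l • S) i ω - (l • S) j ω‖ = l * ‖S i ω - S j ω‖ := by
    simp only [Pi.smul_apply, ← smul_sub, norm_smul, Real.norm_of_nonneg hl₀.le]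
  have hincr : ∀ i < N, ∀ᵐ ω ∂P, ‖(l • S) (i + 1) ω - (l • S) i ω‖ ≤ l * c i := fun i hi ↦ by
    filter_upwards [hc i hi] with ω hω
    rw [hnorm]
    gcongr
  have hscaled := measureReal_le_norm_martingale_sub_le_exp_div_cosh (hS.smul l) hincr
    (mul_nonneg hl₀.le hr.le)
  simp only [hnorm, mul_le_mul_iff_right₀ hl₀, mul_pow, ← Finset.mul_sum] at hscaled
  calc P.real {ω | r ≤ ‖S N ω - S 0 ω‖}
      ≤ Real.exp (l ^ 2 * V / 2) / Real.cosh (l * r) := hscaled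
    _ ≤ Real.exp (l ^ 2 * V / 2) / (Real.exp (l * r) / 2) := by
        gcongr
        exact exp_div_two_le_cosh _
    _ = 2 * Real.exp (l ^ 2 * V / 2 - l * r) := by
        rw [Real.exp_sub]
        field_simp
    _ = 2 * Real.exp (-r ^ 2 / (2 * V)) := by
        congr 2
        rw [hl]
        field_simp
        ring

lemma measureReal_lt_sq_norm_martingale_sub_le (hS : Martingale S ℱ P)
    (hc : ∀ i < N, ∀ᵐ ω ∂P, ‖S (i + 1) ω - S i ω‖ ≤ c i) {t : ℝ} (ht : 0 ≤ t) :
    P.real {ω | 2 * t * ∑ i ∈ Finset.range N, c i ^ 2 < ‖S N ω - S 0 ω‖ ^ 2} ≤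
      2 * Real.exp (-t) := by
  set V := ∑ i ∈ Finset.range N, c i ^ 2
  have hV₀ : 0 ≤ V := Finset.sum_nonneg fun _ _ ↦ sq_nonneg _
  rcases hV₀.eq_or_lt with hV | hV
  · have hnull : P {ω | 2 * t * V < ‖S N ω - S 0 ω‖ ^ 2} = 0 :=
      measure_eq_zero_iff_ae_notMem.2 <| by
        filter_upwards [ae_eq_of_norm_sub_le_of_sum_sq_eq_zero hc hV.symm] with ω hω
        simp [hω, ← hV]
    rw [measureReal_def, hnull, ENNReal.toReal_zero]
    positivity
  · have hsub : {ω | 2 * t * V < ‖S N ω - S 0 ω‖ ^ 2} ⊆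
        {ω | √(2 * t * V) ≤ ‖S N ω - S 0 ω‖} := fun ω (hω : _ < _) ↦
      Real.sqrt_le_iff.2 ⟨norm_nonneg _, hω.le⟩
    calc P.real {ω | 2 * t * V < ‖S N ω - S 0 ω‖ ^ 2}
        ≤ P.real {ω | √(2 * t * V) ≤ ‖S N ω - S 0 ω‖} := measureReal_mono hsub
      _ ≤ 2 * Real.exp (-√(2 * t * V) ^ 2 / (2 * V)) :=
          measureReal_le_norm_martingale_sub_le hS hc hV (Real.sqrt_nonneg _)
      _ = 2 * Real.exp (-t) := by
          rw [Real.sq_sqrt (by positivity)]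
          congr 2
          field_simp

lemma ofReal_one_sub_le_measure_sq_norm_martingale_sub_le (hS : Martingale S ℱ P)
    (hc : ∀ i < N, ∀ᵐ ω ∂P, ‖S (i + 1) ω - S i ω‖ ≤ c i)
    {δ : ℝ} (hδ : δ ∈ Set.Ioo (0 : ℝ) 1) :
    ENNReal.ofReal (1 - δ) ≤ P {ω | ‖S N ω - S 0 ω‖ ^ 2 ≤
      2 * Real.log (2 / δ) * ∑ i ∈ Finset.range N, c i ^ 2} := by
  obtain ⟨hδ₀, hδ₁⟩ := hδ
  set B := {ω | ‖S N ω - S 0 ω‖ ^ 2 ≤ 2 * Real.log (2 / δ) * ∑ i ∈ Finset.range N, c i ^ 2} with hB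
  have hlog : 0 ≤ Real.log (2 / δ) := Real.log_nonneg ((one_le_div hδ₀).2 (by linarith))
  have hmeas (n : ℕ) : StronglyMeasurable (S n) := (hS.stronglyMeasurable n).mono (ℱ.le n)
  have hBmeas : MeasurableSet B :=
    measurableSet_le (((hmeas N).sub (hmeas 0)).norm.measurable.pow_const 2) measurable_const
  have hcompl : P.real Bᶜ ≤ δ := by
    have hexp : 2 * Real.exp (-Real.log (2 / δ)) = δ := by
      rw [Real.exp_neg, Real.exp_log (by positivity)]
      field_simp
    simpa only [hB, Set.compl_ofPred, not_le, hexp] using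
      measureReal_lt_sq_norm_martingale_sub_le hS hc hlog
  rw [probReal_compl_eq_one_sub hBmeas] at hcompl
  exact ENNReal.ofReal_le_of_le_toReal (sub_le_comm.1 hcompl)

end Martingale

lemma martingale_sum_range {E Ω : Type*} [NormedAddCommGroup E] [NormedSpace ℝ E]
    [CompleteSpace E] {m0 : MeasurableSpace Ω} {P : Measure Ω} [IsFiniteMeasure P]
    {ℱ : Filtration ℕ m0} {X : ℕ → Ω → E} (hX : ∀ n, StronglyMeasurable[ℱ (n + 1)] (X n))
    (hint : ∀ n, Integrable (X n) P) (hX₀ : ∀ n, P[X n | ℱ n] =ᵐ[P] 0) :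
    Martingale (fun n ↦ ∑ i ∈ Finset.range n, X i) ℱ P := by
  have hadp : StronglyAdapted ℱ fun n ↦ ∑ i ∈ Finset.range n, X i := fun n ↦
    Finset.stronglyMeasurable_sum _ fun i hi ↦
      (hX i).mono (ℱ.mono (Finset.mem_range.1 hi))
  have hsum (n : ℕ) : Integrable (∑ i ∈ Finset.range n, X i) P :=
    integrable_finsetSum' _ fun i _ ↦ hint i
  refine martingale_nat hadp hsum fun n ↦ ?_
  rw [Finset.sum_range_succ]
  filter_upwards [condExp_add (hsum n) (hint n) (ℱ n), hX₀ n] with ω hadd hω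
  simp [hadd, hω, condExp_of_stronglyMeasurable (ℱ.le n) (hadp n) (hsum n)]

theorem stmt1_general {E Ω : Type*} [NormedAddCommGroup E] [InnerProductSpace ℝ E]
    [CompleteSpace E] {m0 : MeasurableSpace Ω} {P : Measure Ω} [IsProbabilityMeasure P]
    {ℱ : Filtration ℕ m0} {X : ℕ → Ω → E} {c : ℕ → ℝ} {N : ℕ} {δ : ℝ}
    (hX : ∀ n, StronglyMeasurable[ℱ (n + 1)] (X n)) (hX₀ : ∀ n, P[X n | ℱ n] =ᵐ[P] 0)
    (hc : ∀ n, ∀ᵐ ω ∂P, ‖X n ω‖ ≤ c n) (hδ : δ ∈ Set.Ioo (0 : ℝ) 1) :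
    ENNReal.ofReal (1 - δ) ≤ P {ω | ‖∑ n ∈ Finset.range N, X n ω‖ ^ 2 ≤
      2 * Real.log (2 / δ) * ∑ n ∈ Finset.range N, c n ^ 2} := by
  have hint (n : ℕ) : Integrable (X n) P :=
    .of_bound ((hX n).mono (ℱ.le _)).aestronglyMeasurable (c n) (hc n)
  have hincr : ∀ i < N, ∀ᵐ ω ∂P, ‖(∑ j ∈ Finset.range (i + 1), X j) ω -
      (∑ j ∈ Finset.range i, X j) ω‖ ≤ c i := fun i _ ↦ by
    simpa [Finset.sum_range_succ] using hc i
  simpa using ofReal_one_sub_le_measure_sq_norm_martingale_sub_le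
    (martingale_sum_range hX hint hX₀) hincr hδ

/-- The filtration whose `n`-th σ-algebra is generated by the strict past `X 0, ..., X (n - 1)`,
against which a martingale-difference sequence is conditioned. It is one step behind
`Filtration.natural`, whose `n`-th σ-algebra also contains the information of `X n`. -/
def pastFiltration {E Ω : Type*} [MeasurableSpace E] [m0 : MeasurableSpace Ω] (X : ℕ → Ω → E)
    (hX : ∀ n, Measurable (X n)) : Filtration ℕ m0 where
  seq n := ⨆ i ∈ Finset.range n, MeasurableSpace.comap (X i) inferInstance
  mono' _ _ hmn := biSup_mono fun _ hi ↦ Finset.range_mono hmn hi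
  le' _ := iSup₂_le fun i _ ↦ (hX i).comap_le

lemma measurable_pastFiltration_succ {E Ω : Type*} [MeasurableSpace E] [MeasurableSpace Ω]
    {X : ℕ → Ω → E} (hX : ∀ n, Measurable (X n)) (n : ℕ) :
    Measurable[pastFiltration X hX (n + 1)] (X n) :=
  (comap_measurable (X n)).mono
    (le_iSup₂_of_le n (Finset.self_mem_range_succ n) le_rfl) le_rfl

/-- Azuma-type concentration (Lemma 2.4 of Alistarh et al.): if `X 0, ..., X (N-1)` are
`ℝ^d`-valued random vectors with `E[X n | X 0, ..., X (n-1)] = 0` and `‖X n‖ ≤ M` a.s.,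
then `P[‖X 0 + ⋯ + X (N-1)‖² ≤ 2 log(2/δ) M² N] ≥ 1 − δ`. -/
theorem stmt1 {d : ℕ} {Ω : Type*} [m0 : MeasurableSpace Ω] (P : Measure Ω)
    [IsProbabilityMeasure P] (N : ℕ) (M δ : ℝ) (hM : 0 < M) (hδ : δ ∈ Set.Ioo (0 : ℝ) 1)
    (X : ℕ → Ω → EuclideanSpace ℝ (Fin d))
    (hmeas : ∀ n, Measurable (X n))
    -- martingale-difference property w.r.t. the natural filtration:
    -- `E[X n | X 0, ..., X (n-1)] = 0` a.s., where the conditioning σ-algebra is the one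
    -- generated by the preceding variables
    (hmd : ∀ n, P[X n | ⨆ i ∈ Finset.range n, MeasurableSpace.comap (X i) (by infer_instance)]
      =ᵐ[P] 0)
    (hbdd : ∀ n, ∀ᵐ ω ∂P, ‖X n ω‖ ≤ M) :
    ENNReal.ofReal (1 - δ) ≤
      P {ω | ‖∑ n ∈ Finset.range N, X n ω‖ ^ 2 ≤ 2 * Real.log (2 / δ) * M ^ 2 * N} := by
  simpa [mul_assoc, mul_comm] using stmt1_general (ℱ := pastFiltration X hmeas)
    (fun n ↦ (measurable_pastFiltration_succ hmeas n).stronglyMeasurable) hmd hbdd hδ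
end

section
/- Let g ∈ ℝ^d, V > 0, and let μ^(1), ..., μ^(K) ∈ ℝ^d with a subset G ⊆ {1,...,K} of size |G| > K/2 such that μ^(k) = (1/B)∑_{i=1}^B g_{k,i} for each k ∈ G, where every g_{k,i} satisfies ‖g_{k,i} − g‖ ≤ V. Then: (a) ‖μ^(k) − g‖ ≤ V for all k ∈ G; (b) if μ_med = μ^(j) for any index j ∈ {1,...,K} such that |{k' ∈ {1,...,K} : ‖μ^(k')− μ^(j)‖ ≤ 2V}| > K/2, then ‖μ_med − g‖ ≤ 3V and ‖μ^(k) − μ_med‖ ≤ 4V for every k ∈ G. -/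
open scoped Classical

/-!
Two strict majorities of a finite index set share an index. Averaging keeps the honest vectors in
the ball of radius `V` around `g`, so this applies to the honest vectors near `g` and the vectors
near the median: a common index and the triangle inequality bound the distance from `g` to the
median.
-/

open scoped Finset

theorem inv_card_smul_sum_mem_of_convex {𝕜 E κ : Type*} [Field 𝕜] [LinearOrder 𝕜]
    [IsStrictOrderedRing 𝕜] [AddCommGroup E] [Module 𝕜 E] {C : Set E} (hC : Convex 𝕜 C)
    {t : Finset κ} (ht : t.Nonempty) {z : κ → E} (hz : ∀ i ∈ t, z i ∈ C) :
    (#t : 𝕜)⁻¹ • ∑ i ∈ t, z i ∈ C := by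
  have hcard : (#t : 𝕜) ≠ 0 := Nat.cast_ne_zero.2 ht.card_ne_zero
  rw [Finset.smul_sum]
  exact hC.sum_mem (fun _ _ => by positivity) (by simp [hcard]) hz

section Majority

variable {ι : Type*} [Fintype ι]

theorem inter_nonempty_of_half_card_lt_card {s t : Finset ι}
    (hs : (Fintype.card ι : ℝ) / 2 < #s) (ht : (Fintype.card ι : ℝ) / 2 < #t) :
    (s ∩ t).Nonempty := by
  have hcard : (Fintype.card ι : ℝ) < #s + #t := by linarith
  exact Finset.inter_nonempty_of_card_lt_card_add_card s.subset_univ t.subset_univ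
    (by exact_mod_cast hcard)

variable {X : Type*} [PseudoMetricSpace X]

/-- More than half of the members of the family `μ`, counted with multiplicity, lie within distance
`r` of `x`. A vector median of `μ` is a member of the family with this property for `r = 2V`. -/
def HasMajorityWithin (μ : ι → X) (x : X) (r : ℝ) : Prop :=
  (Fintype.card ι : ℝ) / 2 < #{k | dist (μ k) x ≤ r}

namespace HasMajorityWithin

variable {μ : ι → X} {x y : X} {r s : ℝ}

theorem of_forall_mem_dist_le {G : Finset ι} (hG : (Fintype.card ι : ℝ) / 2 < #G)
    (h : ∀ k ∈ G, dist (μ k) x ≤ r) : HasMajorityWithin μ x r := by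
  have hsub : G ⊆ ({k | dist (μ k) x ≤ r} : Finset ι) := fun k hk => by simpa using h k hk
  exact hG.trans_le (mod_cast Finset.card_le_card hsub)

theorem dist_le_add (hx : HasMajorityWithin μ x r) (hy : HasMajorityWithin μ y s) :
    dist x y ≤ r + s := by
  obtain ⟨k, hk⟩ := inter_nonempty_of_half_card_lt_card hx hy
  obtain ⟨hkx, hky⟩ : dist (μ k) x ≤ r ∧ dist (μ k) y ≤ s := by simpa using hk
  exact (dist_triangle_left x y (μ k)).trans (add_le_add hkx hky)

end HasMajorityWithin

end Majority

theorem stmt4_general {ι κ E : Type*} [Fintype ι] [Fintype κ] [Nonempty κ]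
    [SeminormedAddCommGroup E] [NormedSpace ℝ E] {g : E} {V : ℝ} {μ : ι → E} {G : Finset ι}
    (hGcard : (Fintype.card ι : ℝ) / 2 < #G) {gs : ι → κ → E}
    (havg : ∀ k ∈ G, μ k = (Fintype.card κ : ℝ)⁻¹ • ∑ i, gs k i)
    (hbd : ∀ k ∈ G, ∀ i, ‖gs k i - g‖ ≤ V) :
    (∀ k ∈ G, ‖μ k - g‖ ≤ V) ∧
    (∀ (m : E) (r : ℝ), (Fintype.card ι : ℝ) / 2 < #{k | ‖μ k - m‖ ≤ r} →
      ‖m - g‖ ≤ r + V ∧ ∀ k ∈ G, ‖μ k - m‖ ≤ r + 2 * V) := by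
  simp only [← dist_eq_norm] at hbd ⊢
  have honest : ∀ k ∈ G, dist (μ k) g ≤ V := fun k hk => by
    rw [havg k hk]
    exact inv_card_smul_sum_mem_of_convex (convex_closedBall g V) Finset.univ_nonempty
      fun i _ => hbd k hk i
  refine ⟨honest, fun m r (hm : HasMajorityWithin μ m r) => ?_⟩
  have median : dist m g ≤ r + V := hm.dist_le_add (.of_forall_mem_dist_le hGcard honest)
  refine ⟨median, fun k hk => ?_⟩
  calc dist (μ k) m ≤ dist (μ k) g + dist m g := dist_triangle_right _ _ _
    _ ≤ V + (r + V) := add_le_add (honest k hk) median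
    _ = r + 2 * V := by ring

/-- Lemma: if for each honest node `k ∈ G` (with `|G| > K/2`) the vector `μ k` is the
average of `B` samples each within distance `V` of `g`, then (a) `‖μ k − g‖ ≤ V` for all
`k ∈ G`, and (b) for any vector median `μ j` (a vector with more than half of the `K`
vectors within distance `2V` of it) we have `‖μ j − g‖ ≤ 3V` and `‖μ k − μ j‖ ≤ 4V` for
every `k ∈ G`. -/
theorem stmt4 {d K B : ℕ} (hK : 0 < K) (hB : 0 < B)
    (g : EuclideanSpace ℝ (Fin d)) (V : ℝ) (hV : 0 < V)
    (μ : Fin K → EuclideanSpace ℝ (Fin d)) (G : Finset (Fin K))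
    (hGcard : (K : ℝ) / 2 < G.card)
    (gs : Fin K → Fin B → EuclideanSpace ℝ (Fin d))
    (havg : ∀ k ∈ G, μ k = (B : ℝ)⁻¹ • ∑ i, gs k i)
    (hbd : ∀ k ∈ G, ∀ i, ‖gs k i - g‖ ≤ V) :
    (∀ k ∈ G, ‖μ k - g‖ ≤ V) ∧
    (∀ j : Fin K,
      (K : ℝ) / 2 < (Finset.univ.filter fun k' => ‖μ k' - μ j‖ ≤ 2 * V).card →
      ‖μ j - g‖ ≤ 3 * V ∧ ∀ k ∈ G, ‖μ k - μ j‖ ≤ 4 * V) := by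
  have : NeZero B := ⟨hB.ne'⟩
  exact (stmt4_general (by simpa using hGcard) (by simpa using havg) hbd).imp_right fun h j hj =>
    (h (μ j) (2 * V) (by simpa using hj)).imp (·.trans_eq (by ring)) fun hk k hkG =>
      (hk k hkG).trans_eq (by ring)
end

section
/- Let g ∈ ℝ^d, T > 0, and let μ^(1), ..., μ^(K) ∈ ℝ^d with a subset G ⊆ {1,...,K} of size |G| > K/2 such that ‖μ^(k) − g‖ ≤ T for all k ∈ G. Then: (i) every j ∈ G satisfies |{k' ∈ {1,...,K} : ‖μ^(k')− μ^(j)‖ ≤ 2T}| > K/2, so a vector median with threshold 2T exists; (ii) for any j ∈ {1,...,K} with |{k' : ‖μ^(k')− μ^(j)‖ ≤ 2T}| > K/2, setting μ_med = μ^(j), one has ‖μ_med − g‖ ≤ 3T and ‖μ^(k) − μ_med‖ ≤ 4T for every k ∈ G. -/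
open scoped Classical

/-!
Two majorities of a finite index set share an index. A median is close to a majority of the
points, so it is close to some point that is itself close to `g`, and the triangle inequality
through that point bounds its distance to `g`.
-/

section Majority

variable {ι E : Type*} [Fintype ι] [PseudoMetricSpace E]
  {x : ι → E} {c : E} {r s : ℝ} {G H : Finset ι} {j : ι}

/-- A strict majority of a finite index type: more than half of all its elements. The half is
taken in `ℝ`, so it is not rounded when the cardinality is odd. -/
def IsMajority (G : Finset ι) : Prop :=
  (Fintype.card ι : ℝ) / 2 < G.card

/-- The index `j` selects a vector median of the family `x` with threshold `r`: a majority of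
the family lies within distance `r` of `x j`. Medians are recorded by index because the family
may have repeated values, which are counted with multiplicity. -/
def IsVectorMedian (x : ι → E) (r : ℝ) (j : ι) : Prop :=
  IsMajority (Finset.univ.filter fun k => dist (x k) (x j) ≤ r)

theorem IsMajority.mono (hG : IsMajority G) (hGH : G ⊆ H) : IsMajority H :=
  hG.trans_le (Nat.cast_le.mpr (Finset.card_le_card hGH))

theorem IsMajority.exists_mem_mem (hG : IsMajority G) (hH : IsMajority H) :
    ∃ k ∈ G, k ∈ H := by
  have card_lt : Fintype.card ι < G.card + H.card := by
    have : (Fintype.card ι : ℝ) < G.card + H.card := by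
      simpa only [add_halves] using add_lt_add hG hH
    exact_mod_cast this
  obtain ⟨k, hk⟩ := Finset.inter_nonempty_of_card_lt_card_add_card
    (Finset.subset_univ G) (Finset.subset_univ H) card_lt
  exact ⟨k, Finset.mem_inter.mp hk⟩

theorem IsMajority.isVectorMedian (hG : IsMajority G) (hx : ∀ k ∈ G, dist (x k) c ≤ r)
    (hj : dist (x j) c ≤ s) : IsVectorMedian x (r + s) j := by
  refine hG.mono fun k hk => Finset.mem_filter.mpr ⟨Finset.mem_univ k, ?_⟩
  exact (dist_triangle_right (x k) (x j) c).trans (add_le_add (hx k hk) hj)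

theorem IsVectorMedian.dist_le (hj : IsVectorMedian x s j) (hG : IsMajority G)
    (hx : ∀ k ∈ G, dist (x k) c ≤ r) : dist (x j) c ≤ s + r := by
  obtain ⟨k, hk_near, hkG⟩ := hj.exists_mem_mem hG
  calc
    dist (x j) c ≤ dist (x k) (x j) + dist (x k) c := dist_triangle_left (x j) c (x k)
    _ ≤ s + r := add_le_add (Finset.mem_filter.mp hk_near).2 (hx k hkG)

theorem stmt5_general (hG : IsMajority G) (hx : ∀ k ∈ G, dist (x k) c ≤ r) :
    (∀ j ∈ G, IsVectorMedian x (2 * r) j) ∧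
      ∀ j, IsVectorMedian x (2 * r) j →
        dist (x j) c ≤ 3 * r ∧ ∀ k ∈ G, dist (x k) (x j) ≤ 4 * r := by
  refine ⟨fun j hj => ?_, fun j hj => ?_⟩
  · rw [two_mul]
    exact hG.isVectorMedian hx (hx j hj)
  · have dist_center : dist (x j) c ≤ 3 * r := by linarith only [hj.dist_le hG hx]
    refine ⟨dist_center, fun k hk => ?_⟩
    linarith only [dist_triangle_right (x k) (x j) c, hx k hk, dist_center]

end Majority

/-- Lemma: if `‖μ k − g‖ ≤ T` for all `k` in a majority set `G` (`|G| > K/2`), then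
(i) every `j ∈ G` is a vector median with threshold `2T`, i.e. more than half of the `K`
vectors lie within distance `2T` of `μ j`; and (ii) for any such median `μ j` we have
`‖μ j − g‖ ≤ 3T` and `‖μ k − μ j‖ ≤ 4T` for every `k ∈ G`. -/
theorem stmt5 {d K : ℕ} (hK : 0 < K)
    (g : EuclideanSpace ℝ (Fin d)) (T : ℝ) (hT : 0 < T)
    (μ : Fin K → EuclideanSpace ℝ (Fin d)) (G : Finset (Fin K))
    (hGcard : (K : ℝ) / 2 < G.card)
    (hbd : ∀ k ∈ G, ‖μ k - g‖ ≤ T) :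
    (∀ j ∈ G,
      (K : ℝ) / 2 < (Finset.univ.filter fun k' => ‖μ k' - μ j‖ ≤ 2 * T).card) ∧
    (∀ j : Fin K,
      (K : ℝ) / 2 < (Finset.univ.filter fun k' => ‖μ k' - μ j‖ ≤ 2 * T).card →
      ‖μ j - g‖ ≤ 3 * T ∧ ∀ k ∈ G, ‖μ k - μ j‖ ≤ 4 * T) := by
  have hG : IsMajority G := by rwa [IsMajority, Fintype.card_fin]
  simp only [← dist_eq_norm] at hbd ⊢
  simpa only [IsVectorMedian, IsMajority, Fintype.card_fin] using stmt5_general hG hbd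
end

section
/- Let g ∈ ℝ^d, T > 0, α ∈ [0, 1/2), and μ^(1), ..., μ^(K) ∈ ℝ^d with G ⊆ {1,...,K}, |G| ≥ (1−α)K, and ‖μ^(k) − g‖ ≤ T for all k ∈ G. Let μ_med be any μ^(j) with |{k' : ‖μ^(k')− μ^(j)‖ ≤ 2T}| > K/2, and define G_t = {k ∈ {1,...,K} : ‖μ^(k) − μ_med‖ ≤ 4T}. Then G ⊆ G_t, and consequently |G_t| ≥ (1 − α)K and |G_t \ G| ≤ αK. -/
open scoped Classical

/-!
The honest reports and the reports within `r` of the median together number more than `K`, so some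
honest report `i` lies within `r` of the median. Any other honest report is within `2 * T` of `i`
through `g`, hence within `2 * T + r` of the median, which is the filter radius `4 * T` for
`r = 2 * T`.
-/

open Finset

section Counting

variable {ι : Type*} [Fintype ι] [DecidableEq ι] {s t : Finset ι}

lemma inter_nonempty_of_half_le_card_of_half_lt_card
    (hs : (Fintype.card ι : ℝ) / 2 ≤ #s) (ht : (Fintype.card ι : ℝ) / 2 < #t) :
    (s ∩ t).Nonempty := by
  refine inter_nonempty_of_card_lt_card_add_card (subset_univ s) (subset_univ t) ?_
  have hsum : (Fintype.card ι : ℝ) < #s + #t := by linarith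
  rw [card_univ]
  exact_mod_cast hsum

lemma card_sdiff_le_mul_card_of_one_sub_mul_card_le {α : ℝ} (t : Finset ι)
    (hs : (1 - α) * Fintype.card ι ≤ #s) : (#(t \ s) : ℝ) ≤ α * Fintype.card ι := by
  have hcard : #(t \ s) + #s ≤ Fintype.card ι := by
    rw [← card_union_of_disjoint sdiff_disjoint]
    exact card_le_univ _
  have hcard' : (#(t \ s) : ℝ) + #s ≤ Fintype.card ι := by exact_mod_cast hcard
  linarith

end Counting

section Filtering

variable {ι X : Type*} [Fintype ι]

/-- The indices of the reports `x` at distance at most `r` from `m`; for `m` the median and `r` the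
filter radius this is the estimated honest set `G_t`. -/
noncomputable def reportsWithin [PseudoMetricSpace X] (x : ι → X) (m : X) (r : ℝ) : Finset ι :=
  {k | dist (x k) m ≤ r}

/-- The vector-median condition: more than half of the reports `x` lie within `r` of `m`. Unlike
the vector median itself, `m` need not be one of the reports. -/
def IsMajorityCenter [PseudoMetricSpace X] (x : ι → X) (r : ℝ) (m : X) : Prop :=
  (Fintype.card ι : ℝ) / 2 < #(reportsWithin x m r)

lemma reportsWithin_eq_filter_norm [SeminormedAddCommGroup X] (x : ι → X) (m : X) (r : ℝ) :
    reportsWithin x m r = ({k | ‖x k - m‖ ≤ r} : Finset ι) := by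
  simp only [reportsWithin, dist_eq_norm]

variable [PseudoMetricSpace X] {x : ι → X} {g m : X} {r R T α : ℝ} {G : Finset ι} {i k : ι}

lemma mem_reportsWithin : k ∈ reportsWithin x m r ↔ dist (x k) m ≤ r := by
  simp only [reportsWithin, mem_filter_univ]

lemma subset_reportsWithin_of_mem (hG : ∀ k ∈ G, dist (x k) g ≤ T) (hiG : i ∈ G)
    (him : i ∈ reportsWithin x m r) (hR : 2 * T + r ≤ R) : G ⊆ reportsWithin x m R := by
  intro k hk
  rw [mem_reportsWithin] at him ⊢
  calc
    dist (x k) m ≤ dist (x k) g + dist g (x i) + dist (x i) m := dist_triangle4 _ _ _ _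
    _ ≤ T + T + r := by
      rw [dist_comm g]
      exact add_le_add_three (hG k hk) (hG i hiG) him
    _ = 2 * T + r := by rw [two_mul]
    _ ≤ R := hR

lemma IsMajorityCenter.subset_reportsWithin (hm : IsMajorityCenter x r m)
    (hGcard : (Fintype.card ι : ℝ) / 2 ≤ #G) (hG : ∀ k ∈ G, dist (x k) g ≤ T)
    (hR : 2 * T + r ≤ R) : G ⊆ reportsWithin x m R := by
  obtain ⟨i, hi⟩ := inter_nonempty_of_half_le_card_of_half_lt_card hGcard hm
  obtain ⟨hiG, him⟩ := mem_inter.mp hi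
  exact subset_reportsWithin_of_mem hG hiG him hR

theorem stmt7_general [DecidableEq ι] (hα : α ≤ 1 / 2)
    (hGcard : (1 - α) * Fintype.card ι ≤ #G) (hG : ∀ k ∈ G, dist (x k) g ≤ T)
    (hm : IsMajorityCenter x r m) (hR : 2 * T + r ≤ R) :
    G ⊆ reportsWithin x m R ∧
      (1 - α) * Fintype.card ι ≤ #(reportsWithin x m R) ∧
      (#(reportsWithin x m R \ G) : ℝ) ≤ α * Fintype.card ι := by
  have hhalf : (Fintype.card ι : ℝ) / 2 ≤ #G := calc
    (Fintype.card ι : ℝ) / 2 = (1 - 1 / 2) * Fintype.card ι := by ring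
    _ ≤ (1 - α) * Fintype.card ι := by gcongr
    _ ≤ #G := hGcard
  have hsub := hm.subset_reportsWithin hhalf hG hR
  have hcard_le : (#G : ℝ) ≤ #(reportsWithin x m R) := by
    exact_mod_cast card_le_card hsub
  exact ⟨hsub, hGcard.trans hcard_le, card_sdiff_le_mul_card_of_one_sub_mul_card_le _ hGcard⟩

end Filtering

/-- Byzantine filtering: if `‖μ k − g‖ ≤ T` for all `k` in the honest set `G` with
`|G| ≥ (1−α)K` (and `(1−α)K > K/2`), and `μ j` is a vector median (more than half of the
`K` vectors lie within `2T` of it), then the filtered set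
`G_t = {k : ‖μ k − μ j‖ ≤ 4T}` contains `G`, has `|G_t| ≥ (1−α)K`, and
`|G_t \ G| ≤ αK`. -/
theorem stmt7 {d K : ℕ} (hK : 0 < K)
    (g : EuclideanSpace ℝ (Fin d)) (T α : ℝ) (hT : 0 < T)
    (hα : α ∈ Set.Ico (0 : ℝ) (1 / 2))
    (μ : Fin K → EuclideanSpace ℝ (Fin d)) (G : Finset (Fin K))
    (hGcard : (1 - α) * K ≤ G.card)
    (hbd : ∀ k ∈ G, ‖μ k - g‖ ≤ T)
    (j : Fin K)
    (hmed : (K : ℝ) / 2 < (Finset.univ.filter fun k' => ‖μ k' - μ j‖ ≤ 2 * T).card)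
    (Gt : Finset (Fin K))
    (hGt : Gt = Finset.univ.filter fun k => ‖μ k - μ j‖ ≤ 4 * T) :
    G ⊆ Gt ∧ (1 - α) * K ≤ Gt.card ∧ (Gt \ G).card ≤ α * K := by
  simpa only [hGt, reportsWithin_eq_filter_norm, Fintype.card_fin] using
    stmt7_general (x := μ) (m := μ j) (r := 2 * T) (R := 4 * T) hα.2.le
      (by simpa only [Fintype.card_fin] using hGcard)
      (by simpa only [dist_eq_norm] using hbd)
      (by simpa only [IsMajorityCenter, reportsWithin_eq_filter_norm, Fintype.card_fin] using hmed)
      (by linarith)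
end

section
/- Let (Ω, P) be a probability space and D a distribution of samples ξ. Suppose f(·;ξ): ℝ^d → ℝ has a gradient ∇f(·;ξ) that is L-Lipschitz for each ξ, and f(x) = E_{ξ∼D} f(x;ξ) with ∇f(x) = E_{ξ∼D} ∇f(x;ξ). Fix x, x_0, μ ∈ ℝ^d, set e = μ − ∇f(x_0), and for ξ ∼ D define v = ∇f(x;ξ) − ∇f(x_0;ξ) + μ. Then E_ξ[v] = ∇f(x) + e and E_ξ‖v‖² ≤ L²‖x − x_0‖² + 2‖∇f(x)‖² + 2‖e‖². -/
open MeasureTheory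

/-!
Write `V = ∇f(x;ξ) - ∇f(x₀;ξ)`, so that `v = V + μ` and `E V + μ = ∇f(x) + e`. Expanding the square
about the mean gives `E‖V + μ‖² = E‖V‖² - ‖E V‖² + ‖E V + μ‖²`. The Lipschitz hypothesis enters only
through `E‖V‖² ≤ L²‖x - x₀‖²`, so Lipschitz continuity in mean square is enough.
-/

theorem norm_add_sq_le_two_mul {E : Type*} [SeminormedAddGroup E] (a b : E) :
    ‖a + b‖ ^ 2 ≤ 2 * ‖a‖ ^ 2 + 2 * ‖b‖ ^ 2 :=
  calc
    ‖a + b‖ ^ 2 ≤ (‖a‖ + ‖b‖) ^ 2 := by gcongr; exact norm_add_le a b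
    _ ≤ 2 * (‖a‖ ^ 2 + ‖b‖ ^ 2) := add_sq_le
    _ = 2 * ‖a‖ ^ 2 + 2 * ‖b‖ ^ 2 := mul_add ..

section Moments

variable {Ω E : Type*} [MeasurableSpace Ω] {P : Measure Ω} [NormedAddCommGroup E]

theorem integral_norm_sq_eq_lpNorm_sq {X : Ω → E} (hX : AEStronglyMeasurable X P) :
    ∫ ω, ‖X ω‖ ^ 2 ∂P = lpNorm X 2 P ^ 2 := by
  have hnonneg : 0 ≤ ∫ ω, ‖X ω‖ ^ 2 ∂P := by positivity
  rw [lpNorm_eq_integral_norm_rpow_toReal two_ne_zero ENNReal.ofNat_ne_top hX]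
  simp only [ENNReal.toReal_ofNat, Real.rpow_ofNat]
  exact (Real.rpow_inv_natCast_pow hnonneg two_ne_zero).symm

theorem integral_norm_sq_le_of_eLpNorm_le {X : Ω → E} {c : ℝ} (hX : AEStronglyMeasurable X P)
    (hc : eLpNorm X 2 P ≤ ENNReal.ofReal c) : ∫ ω, ‖X ω‖ ^ 2 ∂P ≤ c ^ 2 := by
  have hnorm : lpNorm X 2 P ≤ |c| :=
    calc
      lpNorm X 2 P = (eLpNorm X 2 P).toReal := (toReal_eLpNorm hX).symm
      _ ≤ (ENNReal.ofReal c).toReal := ENNReal.toReal_mono ENNReal.ofReal_ne_top hc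
      _ = max c 0 := ENNReal.toReal_ofReal'
      _ ≤ |c| := max_le (le_abs_self c) (abs_nonneg c)
  rw [integral_norm_sq_eq_lpNorm_sq hX, ← sq_abs c]
  gcongr
  exact lpNorm_nonneg

theorem eLpNorm_le_ofReal_of_ae_norm_le [IsProbabilityMeasure P] {X : Ω → E} {p : ENNReal} {c : ℝ}
    (hc : ∀ᵐ ω ∂P, ‖X ω‖ ≤ c) : eLpNorm X p P ≤ ENNReal.ofReal c := by
  simpa only [measure_univ, ENNReal.one_rpow, one_mul] using eLpNorm_le_of_ae_bound (p := p) hc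

theorem integral_add_const [NormedSpace ℝ E] [CompleteSpace E] [IsProbabilityMeasure P] {X : Ω → E}
    (hX : Integrable X P) (c : E) : ∫ ω, (X ω + c) ∂P = ∫ ω, X ω ∂P + c := by
  rw [integral_add hX (integrable_const c), integral_const, probReal_univ, one_smul]

variable [InnerProductSpace ℝ E] [CompleteSpace E] [IsProbabilityMeasure P]

theorem integral_norm_add_const_sq {X : Ω → E} (hX : MemLp X 2 P) (c : E) :
    ∫ ω, ‖X ω + c‖ ^ 2 ∂P =
      ∫ ω, ‖X ω‖ ^ 2 ∂P - ‖∫ ω, X ω ∂P‖ ^ 2 + ‖∫ ω, X ω ∂P + c‖ ^ 2 := by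
  have hX₁ : Integrable X P := hX.integrable one_le_two
  have hsq : Integrable (fun ω => ‖X ω‖ ^ 2) P := hX.integrable_norm_pow two_ne_zero
  have hinner : Integrable (fun ω => 2 * inner ℝ c (X ω)) P := (hX₁.const_inner c).const_mul 2
  have hsum : Integrable (fun ω => ‖X ω‖ ^ 2 + 2 * inner ℝ c (X ω)) P := hsq.add hinner
  have hexpand : ∫ ω, ‖X ω + c‖ ^ 2 ∂P =
      ∫ ω, ‖X ω‖ ^ 2 ∂P + 2 * inner ℝ c (∫ ω, X ω ∂P) + ‖c‖ ^ 2 := by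
    simp only [norm_add_sq_real, real_inner_comm c]
    rw [integral_add_const hsum, integral_add hsq hinner, integral_const_mul, integral_inner hX₁]
  rw [hexpand, norm_add_sq_real, real_inner_comm c]
  ring

theorem integral_norm_add_const_sq_le {X : Ω → E} (hX : MemLp X 2 P) (c : E) :
    ∫ ω, ‖X ω + c‖ ^ 2 ∂P ≤ ∫ ω, ‖X ω‖ ^ 2 ∂P + ‖∫ ω, X ω ∂P + c‖ ^ 2 := by
  rw [integral_norm_add_const_sq hX c]
  gcongr
  exact sub_le_self _ (sq_nonneg _)

end Moments

theorem stmt11_general {α E Ξ : Type*} [PseudoMetricSpace α] [NormedAddCommGroup E]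
    [InnerProductSpace ℝ E] [CompleteSpace E] [MeasurableSpace Ξ] {D : Measure Ξ}
    [IsProbabilityMeasure D] {L : ℝ} {G : α → Ξ → E} {g : α → E}
    (hLip : ∀ y z, eLpNorm (fun ξ => G y ξ - G z ξ) 2 D ≤ ENNReal.ofReal (L * dist y z))
    (hint : ∀ y, Integrable (G y) D) (hg : ∀ y, g y = ∫ ξ, G y ξ ∂D) (x x₀ : α) (μ : E) :
    MemLp (fun ξ => G x ξ - G x₀ ξ + μ) 2 D ∧
    ∫ ξ, (G x ξ - G x₀ ξ + μ) ∂D = g x + (μ - g x₀) ∧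
    ∫ ξ, ‖G x ξ - G x₀ ξ + μ‖ ^ 2 ∂D ≤
      L ^ 2 * dist x x₀ ^ 2 + 2 * ‖g x‖ ^ 2 + 2 * ‖μ - g x₀‖ ^ 2 := by
  have hdiff : MemLp (fun ξ => G x ξ - G x₀ ξ) 2 D :=
    ⟨((hint x).sub (hint x₀)).aestronglyMeasurable, (hLip x x₀).trans_lt ENNReal.ofReal_lt_top⟩
  have hmean : ∫ ξ, (G x ξ - G x₀ ξ) ∂D + μ = g x + (μ - g x₀) := by
    rw [integral_sub (hint x) (hint x₀), ← hg, ← hg]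
    abel
  refine ⟨hdiff.add (memLp_const μ), ?_, ?_⟩
  · rw [integral_add_const (hdiff.integrable one_le_two), hmean]
  · calc
      ∫ ξ, ‖G x ξ - G x₀ ξ + μ‖ ^ 2 ∂D
        ≤ ∫ ξ, ‖G x ξ - G x₀ ξ‖ ^ 2 ∂D + ‖∫ ξ, (G x ξ - G x₀ ξ) ∂D + μ‖ ^ 2 :=
          integral_norm_add_const_sq_le hdiff μ
      _ ≤ (L * dist x x₀) ^ 2 + (2 * ‖g x‖ ^ 2 + 2 * ‖μ - g x₀‖ ^ 2) := by
          rw [hmean]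
          exact add_le_add (integral_norm_sq_le_of_eLpNorm_le hdiff.1 (hLip x x₀))
            (norm_add_sq_le_two_mul _ _)
      _ = L ^ 2 * dist x x₀ ^ 2 + 2 * ‖g x‖ ^ 2 + 2 * ‖μ - g x₀‖ ^ 2 := by ring

/-- Properties of the SVRG direction: with `e = μ − ∇f(x₀)` and
`v(ξ) = ∇f(x;ξ) − ∇f(x₀;ξ) + μ`, one has `E_ξ[v] = ∇f(x) + e` and
`E_ξ‖v‖² ≤ L²‖x − x₀‖² + 2‖∇f(x)‖² + 2‖e‖²`. -/
theorem stmt11 {d : ℕ} {Ξ : Type*} [MeasurableSpace Ξ] (D : Measure Ξ)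
    [IsProbabilityMeasure D] (L : ℝ) (hL : 0 < L)
    (F : EuclideanSpace ℝ (Fin d) → Ξ → ℝ)
    (gradF : EuclideanSpace ℝ (Fin d) → Ξ → EuclideanSpace ℝ (Fin d))
    (f : EuclideanSpace ℝ (Fin d) → ℝ)
    (gradf : EuclideanSpace ℝ (Fin d) → EuclideanSpace ℝ (Fin d))
    -- `gradF x ξ` is the gradient of `f(⋅;ξ)` at `x`, and it is `L`-Lipschitz in `x`
    (hgrad : ∀ ξ x, HasGradientAt (fun y => F y ξ) (gradF x ξ) x)
    (hLip : ∀ ξ y z, ‖gradF y ξ - gradF z ξ‖ ≤ L * ‖y - z‖)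
    -- `f = E_ξ f(⋅;ξ)` and `∇f = E_ξ ∇f(⋅;ξ)`
    (hf : ∀ x, f x = ∫ ξ, F x ξ ∂D)
    (hgradf : ∀ x, gradf x = ∫ ξ, gradF x ξ ∂D)
    (x x₀ μ e : EuclideanSpace ℝ (Fin d)) (he : e = μ - gradf x₀)
    -- all expectations are assumed finite
    (hint : ∀ y, Integrable (fun ξ => gradF y ξ) D)
    (hint2 : Integrable (fun ξ => ‖gradF x ξ - gradF x₀ ξ + μ‖ ^ 2) D) :
    (∫ ξ, (gradF x ξ - gradF x₀ ξ + μ) ∂D = gradf x + e) ∧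
    ∫ ξ, ‖gradF x ξ - gradF x₀ ξ + μ‖ ^ 2 ∂D ≤
      L ^ 2 * ‖x - x₀‖ ^ 2 + 2 * ‖gradf x‖ ^ 2 + 2 * ‖e‖ ^ 2 := by
  subst he
  simpa only [dist_eq_norm] using (stmt11_general (fun y z => dist_eq_norm y z ▸
    eLpNorm_le_ofReal_of_ae_norm_le (.of_forall fun ξ => hLip ξ y z)) hint hgradf x x₀ μ).2
end
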